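/- (Bond-breaking behavior for 2D problems, case 1 < α < 3.) Let δ > 0, s₀ > 0, and 1 < α < 3, and define s_c²(ρ) = (3/(4−α))·(δ/ρ)^{1−α}·s₀² for ρ ∈ (0, δ]. Then: (i) for every ρ with ((4−α)/3)^{1/(α−1)}·δ < ρ ≤ δ, one has s₀² < s_c²(ρ), so a bond of length ρ at stretch squared s₀² breaks under the critical stretch criterion but not under the critical energy density criterion; (ii) for every ρ with 0 < ρ < ((4−α)/3)^{1/(α−1)}·δ, one has s_c²(ρ) < s₀², so a bond of length ρ at stretch squared s_c²(ρ) breaks under the critical energy density criterion but not under the critical stretch criterion. -/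

import Mathlib

open Real

/-!
With `b = (4 - α) / 3` and `p = α - 1 > 0`, the squared critical stretch is
`s_c²(ρ) = (ρ / δ) ^ p / b * s₀²`. Hence `s_c²(ρ)` exceeds `s₀²` exactly when `(ρ / δ) ^ p`
exceeds `b`, that is, when `ρ` exceeds `b ^ (1 / p) * δ`.
-/

lemma rpow_inv_mul_lt_iff {b p δ ρ : ℝ} (hb : 0 ≤ b) (hp : 0 < p) (hδ : 0 < δ) (hρ : 0 ≤ ρ) :
    b ^ p⁻¹ * δ < ρ ↔ b < (ρ / δ) ^ p := by
  rw [← lt_div_iff₀ hδ, rpow_inv_lt_iff_of_pos hb (by positivity) hp]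

lemma lt_rpow_inv_mul_iff {b p δ ρ : ℝ} (hb : 0 ≤ b) (hp : 0 < p) (hδ : 0 < δ) (hρ : 0 ≤ ρ) :
    ρ < b ^ p⁻¹ * δ ↔ (ρ / δ) ^ p < b := by
  rw [← div_lt_iff₀ hδ, lt_rpow_inv_iff_of_pos (by positivity) hb hp]

/-- The squared critical stretch `s_c²(ρ)` of a bond of length `ρ` under the critical energy
density criterion, for horizon `δ`, critical stretch `s₀` and influence function `r ^ (-α)`. -/
noncomputable def criticalStretchSq (δ s₀ α ρ : ℝ) : ℝ :=
  3 / (4 - α) * (δ / ρ) ^ (1 - α) * s₀ ^ 2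

/-- The bond length at which the critical stretch and critical energy density criteria agree. -/
noncomputable def crossoverLength (δ α : ℝ) : ℝ :=
  ((4 - α) / 3) ^ (1 / (α - 1)) * δ

lemma criticalStretchSq_eq (δ s₀ α ρ : ℝ) :
    criticalStretchSq δ s₀ α ρ = (ρ / δ) ^ (α - 1) / ((4 - α) / 3) * s₀ ^ 2 := by
  rw [criticalStretchSq, ← neg_sub α 1, rpow_neg_eq_inv_rpow, inv_div, ← inv_div (4 - α) 3,
    inv_mul_eq_div]

section Comparison

variable {δ s₀ α ρ : ℝ}

lemma crossoverLength_pos (hδ : 0 < δ) (hα : α < 4) : 0 < crossoverLength δ α :=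
  mul_pos (rpow_pos_of_pos (by linarith) _) hδ

lemma crossoverLength_lt (hδ : 0 < δ) (hα₁ : 1 < α) (hα₄ : α < 4) : crossoverLength δ α < δ :=
  mul_lt_of_lt_one_left hδ <|
    rpow_lt_one (by linarith) (by linarith) (one_div_pos.2 (sub_pos.2 hα₁))

lemma sq_lt_criticalStretchSq_iff (hδ : 0 < δ) (hs₀ : s₀ ≠ 0) (hα₁ : 1 < α) (hα₄ : α < 4)
    (hρ : 0 ≤ ρ) : s₀ ^ 2 < criticalStretchSq δ s₀ α ρ ↔ crossoverLength δ α < ρ := by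
  have hb : 0 < (4 - α) / 3 := by linarith
  rw [criticalStretchSq_eq, lt_mul_iff_one_lt_left (by positivity), one_lt_div hb,
    crossoverLength, one_div, rpow_inv_mul_lt_iff hb.le (sub_pos.2 hα₁) hδ hρ]

lemma criticalStretchSq_lt_sq_iff (hδ : 0 < δ) (hs₀ : s₀ ≠ 0) (hα₁ : 1 < α) (hα₄ : α < 4)
    (hρ : 0 ≤ ρ) : criticalStretchSq δ s₀ α ρ < s₀ ^ 2 ↔ ρ < crossoverLength δ α := by
  have hb : 0 < (4 - α) / 3 := by linarith
  rw [criticalStretchSq_eq, mul_lt_iff_lt_one_left (by positivity), div_lt_one hb,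
    crossoverLength, one_div, lt_rpow_inv_mul_iff hb.le (sub_pos.2 hα₁) hδ hρ]

end Comparison

theorem bond_breaking_behavior_2D_one_lt_alpha_lt_three_general
    (δ s₀ α : ℝ) (hδ : 0 < δ) (hs₀ : s₀ ≠ 0) (hα₁ : 1 < α) (hα₄ : α < 4)
    (scsq : ℝ → ℝ)
    (hscsq : ∀ ρ ∈ Set.Ioc 0 δ, scsq ρ = criticalStretchSq δ s₀ α ρ) :
    (∀ ρ : ℝ, crossoverLength δ α < ρ → ρ ≤ δ → s₀ ^ 2 < scsq ρ) ∧
    (∀ ρ : ℝ, 0 < ρ → ρ < crossoverLength δ α → scsq ρ < s₀ ^ 2) := by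
  refine ⟨fun ρ hlt hle ↦ ?_, fun ρ hρ hlt ↦ ?_⟩
  · have hρ : 0 < ρ := (crossoverLength_pos hδ hα₄).trans hlt
    rw [hscsq ρ ⟨hρ, hle⟩]
    exact (sq_lt_criticalStretchSq_iff hδ hs₀ hα₁ hα₄ hρ.le).2 hlt
  · have hle : ρ ≤ δ := (hlt.trans (crossoverLength_lt hδ hα₁ hα₄)).le
    rw [hscsq ρ ⟨hρ, hle⟩]
    exact (criticalStretchSq_lt_sq_iff hδ hs₀ hα₁ hα₄ hρ.le).2 hlt

/-- Bond-breaking behavior for 2D problems, case `1 < α < 3`: with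
`s_c²(ρ) = (3/(4−α))·(δ/ρ)^{1−α}·s₀²`, (i) for `((4−α)/3)^{1/(α−1)}·δ < ρ ≤ δ`,
`s₀² < s_c²(ρ)` (a bond at stretch squared `s₀²` breaks under the critical
stretch criterion but not under the critical energy density criterion); and
(ii) for `0 < ρ < ((4−α)/3)^{1/(α−1)}·δ`, `s_c²(ρ) < s₀²` (a bond at stretch
squared `s_c²(ρ)` breaks under the critical energy density criterion but not
under the critical stretch criterion). -/
theorem bond_breaking_behavior_2D_one_lt_alpha_lt_three
    (δ s₀ α : ℝ) (hδ : 0 < δ) (hs₀ : 0 < s₀) (hα1 : 1 < α) (hα3 : α < 3)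
    (scsq : ℝ → ℝ)
    (hscsq : ∀ ρ ∈ Set.Ioc (0:ℝ) δ,
      scsq ρ = (3 / (4 - α)) * (δ / ρ) ^ ((1:ℝ) - α) * s₀ ^ 2) :
    (∀ ρ : ℝ, ((4 - α) / 3) ^ ((1:ℝ) / (α - 1)) * δ < ρ → ρ ≤ δ →
      s₀ ^ 2 < scsq ρ) ∧
    (∀ ρ : ℝ, 0 < ρ → ρ < ((4 - α) / 3) ^ ((1:ℝ) / (α - 1)) * δ →
      scsq ρ < s₀ ^ 2) :=
  bond_breaking_behavior_2D_one_lt_alpha_lt_three_general δ s₀ α hδ hs₀.ne' hα1 (by linarith)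
    scsq hscsq
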